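/- There exists an absolute constant c > 0 such that if the constant c₀ in the definition of k* satisfies c₀ ≥ c, then in the model Y = Xβ* + ξ with p ≥ n, the minimum ℓ2-norm interpolator β̂ satisfies P( ‖β̂ − β*‖₂ ≤ ‖β*‖₂ + 4‖ξ‖₂/√(r_{k*}(Σ)) ) ≥ 1 − 2e^{−n}. -/

import Mathlib

open MeasureTheory ProbabilityTheory Matrix Finset
open scoped ENNReal Classical

noncomputable section

/-- Euclidean (`ℓ2`) norm of a finite real vector. -/
def enorm2 {m : ℕ} (v : Fin m → ℝ) : ℝ := Real.sqrt (∑ i, v i ^ 2)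

/-- The prediction (semi-)norm `‖Σ^{1/2} d‖₂ = √(dᵀ Σ d)`. -/
def predNorm {p : ℕ} (Sig : Matrix (Fin p) (Fin p) ℝ) (d : Fin p → ℝ) : ℝ :=
  Real.sqrt (d ⬝ᵥ Sig.mulVec d)

/-- The standard Gaussian measure `N(0, I_p)` on `ℝ^p`. -/
def stdGaussian (p : ℕ) : Measure (Fin p → ℝ) :=
  Measure.pi fun _ : Fin p => gaussianReal 0 1

/-- `Σ^{1/2} = P Λ^{1/2} Pᵀ` built from the eigendecomposition data. -/
def covHalf (p : ℕ) (lam : ℕ → ℝ) (Porth : Matrix (Fin p) (Fin p) ℝ) :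
    Matrix (Fin p) (Fin p) ℝ :=
  Porth * Matrix.diagonal (fun i : Fin p => Real.sqrt (lam ((i : ℕ) + 1))) * Porthᵀ

/-- The Gaussian law `N(0,Σ)` on `ℝ^p`, realized as the pushforward of `N(0,I_p)`
by `g ↦ Σ^{1/2} g`. -/
def mvGaussian (p : ℕ) (lam : ℕ → ℝ) (Porth : Matrix (Fin p) (Fin p) ℝ) :
    Measure (Fin p → ℝ) :=
  Measure.map (fun g => (covHalf p lam Porth).mulVec g) (stdGaussian p)

/-- `r_k(Σ) = ∑_{i=k}^p λ_i(Σ)` (eigenvalues `1`-indexed). -/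
def rsum (p : ℕ) (lam : ℕ → ℝ) (k : ℕ) : ℝ := ∑ i ∈ Finset.Icc k p, lam i

/-- The set `{k ∈ {1,…,p} : r_k(Σ)/λ_k(Σ) ≥ c₀ n}`. -/
def kstarSet (p : ℕ) (lam : ℕ → ℝ) (c0 : ℝ) (n : ℕ) : Set ℕ :=
  {k | 1 ≤ k ∧ k ≤ p ∧ c0 * n ≤ rsum p lam k / lam k}

/-- `k* = inf { k ∈ {1,…,p} : r_k(Σ)/λ_k(Σ) ≥ c₀ n }`. -/
def kstar (p : ℕ) (lam : ℕ → ℝ) (c0 : ℝ) (n : ℕ) : ℕ := sInf (kstarSet p lam c0 n)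

/-- `ρ = ‖β*‖₂ + 4‖ξ‖₂/√(r_{k*}(Σ))`. -/
def rho (p : ℕ) (lam : ℕ → ℝ) (c0 : ℝ) (n : ℕ) (βstar : Fin p → ℝ) (ξnorm : ℝ) : ℝ :=
  enorm2 βstar + 4 * ξnorm / Real.sqrt (rsum p lam (kstar p lam c0 n))

/-- `r*(η) = inf { r > 0 : ∑ᵢ min(λ_i(Σ), r²) ≤ η n r² }`. -/
def rstar (p n : ℕ) (lam : ℕ → ℝ) (η : ℝ) : ℝ :=
  sInf {r : ℝ | 0 < r ∧ ∑ i : Fin p, min (lam ((i : ℕ) + 1)) (r ^ 2) ≤ η * n * r ^ 2}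

/-- `r̄(γ) = sup { r > 0 : ∑ᵢ min(λ_i(Σ)ρ², r²) ≤ γ ‖ξ‖₂² }`. -/
def rbar (p : ℕ) (lam : ℕ → ℝ) (γ ρ ξnorm : ℝ) : ℝ :=
  sSup {r : ℝ | 0 < r ∧ ∑ i : Fin p, min (lam ((i : ℕ) + 1) * ρ ^ 2) (r ^ 2) ≤ γ * ξnorm ^ 2}

/-- `k̄ = inf { k ≥ k* : r_k(Σ) ≤ (γ/2) r_{k*}(Σ) }`, with `k̄ = p+1` if the set is empty. -/
def kbar (p : ℕ) (lam : ℕ → ℝ) (c0 : ℝ) (n : ℕ) (γ : ℝ) : ℕ :=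
  if _h : {k | kstar p lam c0 n ≤ k ∧
      rsum p lam k ≤ γ / 2 * rsum p lam (kstar p lam c0 n)}.Nonempty
  then sInf {k | kstar p lam c0 n ≤ k ∧
      rsum p lam k ≤ γ / 2 * rsum p lam (kstar p lam c0 n)}
  else p + 1

/-- `b` is a minimum `ℓ2`-norm interpolator for the design `M` and responses `Y`. -/
def IsMinInterp {n p : ℕ} (M : Fin n → Fin p → ℝ) (Y : Fin n → ℝ) (b : Fin p → ℝ) : Prop :=
  (∀ i, ∑ j, M i j * b j = Y i) ∧
    ∀ b' : Fin p → ℝ, (∀ i, ∑ j, M i j * b' j = Y i) → enorm2 b ≤ enorm2 b'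

lemma integral_exp_mul_sq_gaussianReal (v : NNReal) {s : ℝ} (hs : 2 * s * v < 1) :
    Integrable (fun x : ℝ => Real.exp (s * x ^ 2)) (gaussianReal 0 v) ∧
      ∫ x, Real.exp (s * x ^ 2) ∂(gaussianReal 0 v) = √(1 / (1 - 2 * s * v)) := by
  rcases eq_or_ne v 0 with rfl | hv
  · simp [integrable_dirac]
  have hv0 : (0 : ℝ) < v := by positivity
  have hb : 0 < 1 / (2 * v) - s := by
    rw [sub_pos, lt_div_iff₀ (by positivity)]; linarith
  have key : ∀ x : ℝ, gaussianPDFReal 0 v x * Real.exp (s * x ^ 2) =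
      (√(2 * Real.pi * v))⁻¹ * Real.exp (-(1 / (2 * v) - s) * x ^ 2) := by
    intro x
    rw [gaussianPDFReal, mul_assoc, ← Real.exp_add]
    congr 2
    field_simp
    ring
  constructor
  · rw [gaussianReal_of_var_ne_zero _ hv, integrable_withDensity_iff_integrable_smul₀'
      (by fun_prop) (by simp [gaussianPDF])]
    simp only [gaussianPDF, smul_eq_mul, ENNReal.toReal_ofReal (gaussianPDFReal_nonneg _ _ _), key]
    exact (integrable_exp_neg_mul_sq hb).const_mul _
  · rw [integral_gaussianReal_eq_integral_smul hv]
    simp only [smul_eq_mul, key]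
    rw [integral_const_mul, integral_gaussian, ← Real.sqrt_inv, ← Real.sqrt_mul (by positivity)]
    congr 1
    have : (1 : ℝ) - 2 * s * v ≠ 0 := by linarith
    have h2 : (1 : ℝ) / (2 * v) - s = (1 - 2 * s * v) / (2 * v) := by field_simp
    rw [h2]
    have := Real.pi_pos
    field_simp

lemma sqrt_one_div_one_sub_le_exp {x : ℝ} (h0 : 0 ≤ x) (h1 : x ≤ 1 / 2) :
    √(1 / (1 - x)) ≤ Real.exp x := by
  rw [Real.sqrt_le_left (Real.exp_pos _).le, ← Real.exp_nat_mul, div_le_iff₀ (by linarith)]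
  have h := Real.add_one_le_exp (((2 : ℕ) : ℝ) * x)
  push_cast at h ⊢
  nlinarith

lemma sqrt_one_div_one_add_le_exp {x : ℝ} (h0 : 0 ≤ x) (h1 : x ≤ 1) :
    √(1 / (1 + x)) ≤ Real.exp (-(x / 4)) := by
  rw [Real.sqrt_le_left (Real.exp_pos _).le, ← Real.exp_nat_mul, div_le_iff₀ (by linarith)]
  have h := Real.add_one_le_exp (((2 : ℕ) : ℝ) * -(x / 4))
  push_cast at h ⊢
  nlinarith

lemma integral_exp_sum_sq_pi_gaussianReal {p : ℕ} (v : Fin p → NNReal) (S : Finset (Fin p)) {s : ℝ}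
    (hs : ∀ j ∈ S, 2 * s * v j < 1) :
    Integrable (fun x : Fin p → ℝ => Real.exp (s * ∑ j ∈ S, x j ^ 2))
        (Measure.pi fun j => gaussianReal 0 (v j)) ∧
      ∫ x, Real.exp (s * ∑ j ∈ S, x j ^ 2) ∂(Measure.pi fun j => gaussianReal 0 (v j)) =
        ∏ j ∈ S, √(1 / (1 - 2 * s * v j)) := by
  have hprod : ∀ x : Fin p → ℝ, Real.exp (s * ∑ j ∈ S, x j ^ 2) =
      ∏ j, (fun y : ℝ => if j ∈ S then Real.exp (s * y ^ 2) else 1) (x j) := by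
    intro x
    simp only [Finset.prod_ite_mem, Finset.univ_inter, mul_sum, Real.exp_sum]
  simp only [hprod]
  constructor
  · refine Integrable.fintype_prod (f := fun j (y : ℝ) =>
      if j ∈ S then Real.exp (s * y ^ 2) else 1) fun j => ?_
    by_cases hj : j ∈ S
    · simpa [hj] using (integral_exp_mul_sq_gaussianReal (v j) (hs j hj)).1
    · simp [hj]
  · rw [integral_fintype_prod_eq_prod (f := fun j (y : ℝ) =>
      if j ∈ S then Real.exp (s * y ^ 2) else 1), ← Finset.prod_subset (Finset.subset_univ S)]
    · refine Finset.prod_congr rfl fun j hj => ?_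
      simpa [hj] using (integral_exp_mul_sq_gaussianReal (v j) (hs j hj)).2
    · intro j _ hj
      simp [hj]

lemma measureReal_sum_sq_ge_le {p : ℕ} (v : Fin p → NNReal) (S : Finset (Fin p)) {s : ℝ}
    (hs0 : 0 ≤ s) (hs : ∀ j ∈ S, 2 * s * v j ≤ 1 / 2) (ε : ℝ) :
    (Measure.pi fun j => gaussianReal 0 (v j)).real {x | ε ≤ ∑ j ∈ S, x j ^ 2} ≤
      Real.exp (2 * s * ∑ j ∈ S, (v j : ℝ) - s * ε) := by
  obtain ⟨hint, heq⟩ := integral_exp_sum_sq_pi_gaussianReal v S (s := s)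
    fun j hj => (hs j hj).trans_lt (by norm_num)
  refine (measure_ge_le_exp_mul_mgf ε hs0 hint).trans ?_
  rw [mgf, heq, sub_eq_neg_add, Real.exp_add, neg_mul]
  gcongr
  rw [mul_sum, Real.exp_sum]
  exact Finset.prod_le_prod (fun _ _ => Real.sqrt_nonneg _) fun j hj =>
    sqrt_one_div_one_sub_le_exp (by positivity) (hs j hj)

lemma measureReal_sum_sq_le_le {p : ℕ} (v : Fin p → NNReal) (S : Finset (Fin p)) {s : ℝ}
    (hs0 : 0 ≤ s) (hs : ∀ j ∈ S, 2 * s * v j ≤ 1) (ε : ℝ) :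
    (Measure.pi fun j => gaussianReal 0 (v j)).real {x | ∑ j ∈ S, x j ^ 2 ≤ ε} ≤
      Real.exp (s * ε - s / 2 * ∑ j ∈ S, (v j : ℝ)) := by
  have hpos : ∀ j, 0 ≤ s * v j := fun j => by positivity
  obtain ⟨hint, heq⟩ := integral_exp_sum_sq_pi_gaussianReal v S (s := -s)
    fun j _ => by linarith [hpos j]
  refine (measure_le_le_exp_mul_mgf ε (neg_nonpos.2 hs0) hint).trans ?_
  rw [mgf, heq, sub_eq_add_neg, Real.exp_add, neg_neg]
  gcongr
  rw [mul_sum, ← Finset.sum_neg_distrib, Real.exp_sum]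
  refine Finset.prod_le_prod (fun _ _ => Real.sqrt_nonneg _) fun j hj => ?_
  have h := sqrt_one_div_one_add_le_exp (x := 2 * s * v j) (by positivity) (hs j hj)
  rw [show 1 - 2 * -s * (v j : ℝ) = 1 + 2 * s * v j by ring,
    show -(s / 2 * (v j : ℝ)) = -(2 * s * v j / 4) by ring]
  exact h

lemma measure_le_of_forall_exists_ball {α : Type*} [MeasurableSpace α] {n : ℕ} (μ : Measure α)
    [IsProbabilityMeasure μ] {B : Set (α × EuclideanSpace ℝ (Fin n))} (hB : MeasurableSet B)
    {δ : ℝ≥0∞} (hδ : ∀ w : EuclideanSpace ℝ (Fin n), ‖w‖ < 17 / 16 → μ {a | (a, w) ∈ B} ≤ δ)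
    {A : Set α}
    (hA : ∀ a ∈ A, ∃ v : EuclideanSpace ℝ (Fin n), ‖v‖ ≤ 1 ∧
      ∀ w ∈ Metric.ball v (1 / 16), (a, w) ∈ B) :
    μ A ≤ 17 ^ n * δ := by
  set ν : Measure (EuclideanSpace ℝ (Fin n)) := volume.restrict (Metric.ball 0 (17 / 16))
  set V := volume (Metric.ball (0 : EuclideanSpace ℝ (Fin n)) 1)
  have hvol : ∀ (x : EuclideanSpace ℝ (Fin n)) (r : ℝ), 0 < r →
      volume (Metric.ball x r) = ENNReal.ofReal (r ^ n) * V := by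
    intro x r hr
    rw [Measure.addHaar_ball_of_pos _ _ hr, finrank_euclideanSpace_fin]
  have hball : volume (Metric.ball (0 : EuclideanSpace ℝ (Fin n)) (17 / 16)) =
      17 ^ n * volume (Metric.ball (0 : EuclideanSpace ℝ (Fin n)) (1 / 16)) := by
    rw [hvol _ _ (by norm_num), hvol _ _ (by norm_num), ← mul_assoc]
    congr 1
    rw [show (17 : ℝ≥0∞) = ENNReal.ofReal 17 by simp, ← ENNReal.ofReal_pow (by norm_num),
      ← ENNReal.ofReal_mul (by positivity), ← mul_pow]
    norm_num
  set b := volume (Metric.ball (0 : EuclideanSpace ℝ (Fin n)) (1 / 16))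
  have hb0 : b ≠ 0 := (Metric.measure_ball_pos _ _ (by norm_num)).ne'
  have hbt : b ≠ ⊤ := measure_ball_lt_top.ne
  have hsub : A ⊆ {a | b ≤ ν (Prod.mk a ⁻¹' B)} := by
    intro a ha
    obtain ⟨v, hv, hw⟩ := hA a ha
    have hb : b = volume (Metric.ball v (1 / 16)) := by
      rw [hvol _ _ (by norm_num)]; exact hvol _ _ (by norm_num)
    have hin : Metric.ball v (1 / 16) ⊆ Metric.ball (0 : EuclideanSpace ℝ (Fin n)) (17 / 16) :=
      Metric.ball_subset_ball' (by rw [dist_zero_right]; linarith)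
    calc b = ν (Metric.ball v (1 / 16)) := by
          rw [hb, Measure.restrict_apply Metric.isOpen_ball.measurableSet, Set.inter_eq_left.2 hin]
      _ ≤ ν (Prod.mk a ⁻¹' B) := measure_mono fun w h => hw w h
  calc μ A ≤ μ {a | b ≤ ν (Prod.mk a ⁻¹' B)} := measure_mono hsub
    _ ≤ (∫⁻ a, ν (Prod.mk a ⁻¹' B) ∂μ) / b :=
        meas_ge_le_lintegral_div (measurable_measure_prodMk_left hB).aemeasurable hb0 hbt
    _ = (∫⁻ w, μ ((fun a => (a, w)) ⁻¹' B) ∂ν) / b := by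
        rw [← Measure.prod_apply hB, Measure.prod_apply_symm hB]
    _ ≤ (∫⁻ _, δ ∂ν) / b := by
        gcongr ?_ / b
        refine setLIntegral_mono measurable_const fun w hw => hδ w ?_
        simpa using hw
    _ = 17 ^ n * δ := by
        rw [lintegral_const, Measure.restrict_apply_univ, hball, ← mul_assoc,
          ENNReal.mul_div_cancel_right hb0 hbt, mul_comm]

/-- The coordinates, in the basis formed by the columns of `P`, of the combination `∑ i, w i • M i`
of the rows of `M`. -/
def rotatedComb {n p : ℕ} (P : Matrix (Fin p) (Fin p) ℝ) (M : Fin n → Fin p → ℝ)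
    (w : Fin n → ℝ) (j : Fin p) : ℝ :=
  ∑ i, (∑ l, P l j * M i l) * w i

instance isProbabilityMeasure_mvGaussian (p : ℕ) (lam : ℕ → ℝ) (P : Matrix (Fin p) (Fin p) ℝ) :
    IsProbabilityMeasure (mvGaussian p lam P) := by
  unfold mvGaussian _root_.stdGaussian
  exact Measure.isProbabilityMeasure_map (by fun_prop)

lemma integral_cexp_dotProduct_mvGaussian (p : ℕ) (lam : ℕ → ℝ) (P : Matrix (Fin p) (Fin p) ℝ)
    (u : Fin p → ℝ) :
    ∫ x, Complex.exp ((u ⬝ᵥ x : ℝ) * Complex.I) ∂(mvGaussian p lam P) =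
      Complex.exp (-((∑ l, (u ᵥ* covHalf p lam P) l ^ 2 : ℝ) : ℂ) / 2) := by
  unfold mvGaussian _root_.stdGaussian
  rw [integral_map (by fun_prop) (by fun_prop)]
  simp only [Matrix.dotProduct_mulVec]
  set a := u ᵥ* covHalf p lam P
  have h : ∀ g : Fin p → ℝ, Complex.exp ((a ⬝ᵥ g : ℝ) * Complex.I) =
      ∏ l, (fun y : ℝ => Complex.exp ((a l : ℂ) * y * Complex.I)) (g l) := by
    intro g
    simp [dotProduct, Finset.sum_mul, Complex.exp_sum]
  simp only [h]
  rw [integral_fintype_prod_eq_prod (f := fun l (y : ℝ) => Complex.exp ((a l : ℂ) * y * Complex.I))]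
  simp only [← charFun_apply_real, charFun_gaussianReal, ← Complex.exp_sum]
  simp [Finset.sum_div, neg_div]

lemma map_rotatedComb_pi_mvGaussian {n p : ℕ} (lam : ℕ → ℝ) (P : Matrix (Fin p) (Fin p) ℝ)
    (hlam : ∀ k, 1 ≤ k → k ≤ p → 0 ≤ lam k) (hP : P * Pᵀ = 1) (w : Fin n → ℝ) :
    Measure.map (fun M => rotatedComb P M w) (Measure.pi fun _ : Fin n => mvGaussian p lam P) =
      Measure.pi fun j : Fin p =>
        gaussianReal 0 (lam ((j : ℕ) + 1) * ∑ i, w i ^ 2).toNNReal := by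
  have hP' : Pᵀ * P = 1 := mul_eq_one_comm.1 hP
  have hm : Measurable fun M : Fin n → Fin p → ℝ => rotatedComb P M w := by
    unfold rotatedComb; fun_prop
  have := Measure.isProbabilityMeasure_map (μ := Measure.pi fun _ : Fin n => mvGaussian p lam P)
    hm.aemeasurable
  refine charFun_eq_pi_iff.1 fun t => ?_
  have hlam' : ∀ j : Fin p, 0 ≤ lam ((j : ℕ) + 1) := fun j => hlam _ (by omega) (by omega)
  set τ := P *ᵥ t.ofLp with hτ
  have hcomb : ∀ M : Fin n → Fin p → ℝ,
      inner ℝ (WithLp.toLp 2 (rotatedComb P M w)) t = ∑ i, (w i • τ) ⬝ᵥ M i := by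
    intro M
    simp only [PiLp.inner_apply, rotatedComb, dotProduct, τ, Pi.smul_apply, Matrix.mulVec,
      smul_eq_mul, RCLike.inner_apply, conj_trivial, Finset.mul_sum, Finset.sum_mul]
    rw [Finset.sum_comm]
    refine Finset.sum_congr rfl fun i _ => ?_
    rw [Finset.sum_comm]
    exact Finset.sum_congr rfl fun l _ => Finset.sum_congr rfl fun j _ => by ring
  have hnorm : ∀ c : ℝ, ∑ l, ((c • τ) ᵥ* covHalf p lam P) l ^ 2 =
      c ^ 2 * ∑ j : Fin p, lam ((j : ℕ) + 1) * t j ^ 2 := by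
    intro c
    have h1 : (c • τ) ᵥ* covHalf p lam P =
        P *ᵥ fun j => c * (√(lam ((j : ℕ) + 1)) * t j) := by
      have h2 : τ ᵥ* P = t.ofLp := by
        rw [hτ, ← Matrix.mulVec_transpose, Matrix.mulVec_mulVec, hP', Matrix.one_mulVec]
      rw [covHalf, ← Matrix.vecMul_vecMul, ← Matrix.vecMul_vecMul, Matrix.smul_vecMul, h2,
        Matrix.vecMul_transpose]
      congr 1
      ext j
      simp [Matrix.vecMul_diagonal]
      ring
    have h3 : ∀ a : Fin p → ℝ, ∑ l, a l ^ 2 = a ⬝ᵥ a := fun a => by simp [dotProduct, sq]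
    rw [h1, h3, Matrix.dotProduct_mulVec, ← Matrix.mulVec_transpose, Matrix.mulVec_mulVec, hP',
      Matrix.one_mulVec, ← h3, Finset.mul_sum]
    refine Finset.sum_congr rfl fun j _ => ?_
    rw [mul_pow, mul_pow, Real.sq_sqrt (hlam' j)]
  rw [Measure.map_map (by fun_prop) hm, charFun_apply, integral_map (by fun_prop) (by fun_prop)]
  simp only [Function.comp_apply, hcomb, Complex.ofReal_sum, Finset.sum_mul, Complex.exp_sum]
  rw [integral_fintype_prod_eq_prod (f := fun i (x : Fin p → ℝ) =>
    Complex.exp (((w i • τ) ⬝ᵥ x : ℝ) * Complex.I))]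
  simp only [integral_cexp_dotProduct_mvGaussian, hnorm, charFun_gaussianReal, ← Complex.exp_sum]
  congr 1
  have hnn : ∀ j : Fin p, 0 ≤ lam ((j : ℕ) + 1) * ∑ i, w i ^ 2 := fun j =>
    mul_nonneg (hlam' j) (Finset.sum_nonneg fun i _ => sq_nonneg _)
  simp only [Real.coe_toNNReal _ (hnn _)]
  push_cast
  simp only [mul_zero, zero_mul, zero_sub, neg_div, Finset.sum_neg_distrib, Finset.mul_sum,
    Finset.sum_mul, Finset.sum_div]
  rw [Finset.sum_comm]
  congr 1
  exact Finset.sum_congr rfl fun j _ => Finset.sum_congr rfl fun i _ => by ring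

lemma enorm2_eq_norm {m : ℕ} (v : Fin m → ℝ) : enorm2 v = ‖WithLp.toLp 2 v‖ := by
  simp [enorm2, EuclideanSpace.norm_eq]

lemma inner_eq_zero_of_forall_norm_le_norm_add_smul {E : Type*} [NormedAddCommGroup E]
    [InnerProductSpace ℝ E] {b z : E} (h : ∀ t : ℝ, ‖b‖ ≤ ‖b + t • z‖) : inner ℝ b z = 0 := by
  by_contra hne
  have hz : 0 < ‖z‖ ^ 2 := by
    have : z ≠ 0 := by rintro rfl; simp at hne
    positivity
  have h1 := pow_le_pow_left₀ (norm_nonneg _) (h (-(inner ℝ b z / ‖z‖ ^ 2))) 2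
  rw [norm_add_sq_real, real_inner_smul_right, norm_smul, mul_pow, Real.norm_eq_abs, sq_abs] at h1
  have h2 : 0 < inner ℝ b z ^ 2 / ‖z‖ ^ 2 := by positivity
  have h3 : ‖b‖ ^ 2 + 2 * (-(inner ℝ b z / ‖z‖ ^ 2) * inner ℝ b z) +
      (-(inner ℝ b z / ‖z‖ ^ 2)) ^ 2 * ‖z‖ ^ 2 = ‖b‖ ^ 2 - inner ℝ b z ^ 2 / ‖z‖ ^ 2 := by
    field_simp; ring
  linarith

lemma norm_sub_le_of_minimal_of_adjoint_bound {E F : Type*} [NormedAddCommGroup E]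
    [InnerProductSpace ℝ E] [FiniteDimensional ℝ E] [NormedAddCommGroup F] [InnerProductSpace ℝ F]
    [FiniteDimensional ℝ F] (A : E →ₗ[ℝ] F) {κ : ℝ} (hκ : 0 < κ)
    (hA : ∀ u, κ * ‖u‖ ≤ ‖LinearMap.adjoint A u‖) {b β : E} {ξ : F} (hb : A b = A β + ξ)
    (hmin : ∀ b', A b' = A β + ξ → ‖b‖ ≤ ‖b'‖) : ‖b - β‖ ≤ ‖β‖ + ‖ξ‖ / κ := by
  have hinj : Function.Injective (A ∘ₗ LinearMap.adjoint A) := by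
    rw [injective_iff_map_eq_zero]
    intro u hu
    have h0 : ‖LinearMap.adjoint A u‖ = 0 := by
      rw [← sq_eq_zero_iff, ← real_inner_self_eq_norm_sq, LinearMap.adjoint_inner_left]
      simp_all
    have := hA u
    have : ‖u‖ ≤ 0 := by nlinarith
    simpa using this
  obtain ⟨u, hu⟩ := LinearMap.injective_iff_surjective.1 hinj ξ
  set e := LinearMap.adjoint A u with he
  have hAe : A e = ξ := hu
  have henorm : ‖e‖ ≤ ‖ξ‖ / κ := by
    rw [le_div_iff₀ hκ]
    rcases (norm_nonneg e).eq_or_lt with h0 | hpos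
    · rw [← h0, zero_mul]; positivity
    have h1 : ‖e‖ ^ 2 ≤ ‖u‖ * ‖ξ‖ := by
      rw [← real_inner_self_eq_norm_sq, he, LinearMap.adjoint_inner_left, ← he, hAe]
      exact real_inner_le_norm _ _
    have h2 := mul_le_mul_of_nonneg_right (hA u) (norm_nonneg ξ)
    refine le_of_mul_le_mul_left ?_ hpos
    nlinarith
  set z := b - β - e with hz
  have hAz : A z = 0 := by simp [hz, hb, hAe]
  have hbz : inner ℝ b z = 0 := inner_eq_zero_of_forall_norm_le_norm_add_smul fun t =>
    hmin _ (by simp [hAz, hb])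
  have hez : inner ℝ e z = 0 := by rw [he, LinearMap.adjoint_inner_left, hAz, inner_zero_right]
  have hznorm : ‖z‖ ≤ ‖β‖ := by
    rcases (norm_nonneg z).eq_or_lt with h0 | hpos
    · rw [← h0]; positivity
    have h1 : ‖z‖ ^ 2 = -inner ℝ β z := by
      rw [← real_inner_self_eq_norm_sq]
      nth_rewrite 1 [hz]
      rw [inner_sub_left, inner_sub_left, hbz, hez]; ring
    have h2 := abs_real_inner_le_norm β z
    have h3 := neg_le_abs (inner ℝ β z)
    refine le_of_mul_le_mul_right ?_ hpos
    nlinarith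
  calc ‖b - β‖ = ‖z + e‖ := by rw [hz, sub_add_cancel]
    _ ≤ ‖z‖ + ‖e‖ := norm_add_le _ _
    _ ≤ _ := add_le_add hznorm henorm

/-- The linear map `w ↦ rotatedComb P M w` with the coordinates outside `S` set to zero. -/
def truncatedComb {n p : ℕ} (P : Matrix (Fin p) (Fin p) ℝ) (S : Finset (Fin p))
    (M : Fin n → Fin p → ℝ) : EuclideanSpace ℝ (Fin n) →L[ℝ] EuclideanSpace ℝ (Fin p) :=
  LinearMap.toContinuousLinearMap (Matrix.toEuclideanLin
    (Matrix.of fun j i => if j ∈ S then ∑ l, P l j * M i l else 0))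

lemma norm_truncatedComb_sq {n p : ℕ} (P : Matrix (Fin p) (Fin p) ℝ) (S : Finset (Fin p))
    (M : Fin n → Fin p → ℝ) (w : EuclideanSpace ℝ (Fin n)) :
    ‖truncatedComb P S M w‖ ^ 2 = ∑ j ∈ S, rotatedComb P M w j ^ 2 := by
  rw [EuclideanSpace.real_norm_sq_eq, ← Finset.sum_subset (Finset.subset_univ S)]
  · refine Finset.sum_congr rfl fun j hj => ?_
    simp [truncatedComb, rotatedComb, Matrix.mulVec, dotProduct, hj]
  · intro j _ hj
    simp [truncatedComb, Matrix.mulVec, dotProduct, hj]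

lemma norm_truncatedComb_le {n p : ℕ} {P : Matrix (Fin p) (Fin p) ℝ} (hP : P * Pᵀ = 1)
    (S : Finset (Fin p)) (M : Fin n → Fin p → ℝ) (w : EuclideanSpace ℝ (Fin n)) :
    ‖truncatedComb P S M w‖ ≤ ‖LinearMap.adjoint (Matrix.toEuclideanLin (Matrix.of M)) w‖ := by
  refine le_of_sq_le_sq ?_ (norm_nonneg _)
  rw [norm_truncatedComb_sq, ← Matrix.toEuclideanLin_conjTranspose_eq_adjoint,
    EuclideanSpace.real_norm_sq_eq]
  set y := (Matrix.of M)ᵀ *ᵥ w.ofLp with hy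
  have hrot : ∀ j, rotatedComb P M w j = (Pᵀ *ᵥ y) j := by
    intro j
    simp only [rotatedComb, hy, Matrix.mulVec, dotProduct, Finset.mul_sum, Finset.sum_mul,
      Matrix.transpose_apply, Matrix.of_apply]
    rw [Finset.sum_comm]
    exact Finset.sum_congr rfl fun l _ => Finset.sum_congr rfl fun i _ => by ring
  have hsq : ∀ a : Fin p → ℝ, ∑ l, a l ^ 2 = a ⬝ᵥ a := fun a => by simp [dotProduct, sq]
  calc ∑ j ∈ S, rotatedComb P M w j ^ 2 ≤ ∑ j, rotatedComb P M w j ^ 2 :=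
        Finset.sum_le_sum_of_subset_of_nonneg (Finset.subset_univ S) fun _ _ _ => sq_nonneg _
    _ = ∑ l, y l ^ 2 := by
        simp only [hrot]
        rw [hsq, Matrix.dotProduct_mulVec, ← Matrix.mulVec_transpose, Matrix.transpose_transpose,
          Matrix.mulVec_mulVec, hP, Matrix.one_mulVec, ← hsq]
    _ = _ := by simp [hy, Matrix.conjTranspose_eq_transpose_of_trivial]

section Tail

variable {n p : ℕ} {lam : ℕ → ℝ} {P : Matrix (Fin p) (Fin p) ℝ} {S : Finset (Fin p)} {L r : ℝ}

lemma pi_mvGaussian_ge_le (hlam : ∀ k, 1 ≤ k → k ≤ p → 0 ≤ lam k) (hP : P * Pᵀ = 1) (hL : 0 < L)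
    (hSL : ∀ j ∈ S, lam ((j : ℕ) + 1) ≤ L) (hr : ∑ j ∈ S, lam ((j : ℕ) + 1) = r)
    (hLr : 64 * n * L ≤ r) (w : EuclideanSpace ℝ (Fin n)) (hw : ‖w‖ < 17 / 16) :
    (Measure.pi fun _ : Fin n => mvGaussian p lam P)
      {M | (37 / 20) ^ 2 * r ≤ ∑ j ∈ S, rotatedComb P M w j ^ 2} ≤
        ENNReal.ofReal (Real.exp (-(4 * n))) := by
  have hm : Measurable fun M : Fin n → Fin p → ℝ => rotatedComb P M w := by
    unfold rotatedComb; fun_prop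
  have hw2 : ‖w‖ ^ 2 ≤ 289 / 256 := by nlinarith [norm_nonneg w]
  have hlam' : ∀ j : Fin p, 0 ≤ lam ((j : ℕ) + 1) := fun j => hlam _ (by omega) (by omega)
  have hcoe : ∀ j : Fin p, (((lam ((j : ℕ) + 1) * ∑ i, w i ^ 2).toNNReal : NNReal) : ℝ) =
      lam ((j : ℕ) + 1) * ‖w‖ ^ 2 := fun j => by
    rw [← EuclideanSpace.real_norm_sq_eq, Real.coe_toNNReal _ (mul_nonneg (hlam' j) (sq_nonneg _))]
  have hr0 : 0 ≤ r := hr ▸ Finset.sum_nonneg fun j _ => hlam' j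
  have hmeas : MeasurableSet {x : Fin p → ℝ | (37 / 20) ^ 2 * r ≤ ∑ j ∈ S, x j ^ 2} :=
    measurableSet_le (by fun_prop) (by fun_prop)
  have key := measureReal_sum_sq_ge_le (fun j : Fin p => (lam ((j : ℕ) + 1) * ∑ i, w i ^ 2).toNNReal)
    S (s := 1 / (8 * L)) (by positivity) (fun j hj => by
      rw [hcoe, show 2 * (1 / (8 * L)) * (lam ((j : ℕ) + 1) * ‖w‖ ^ 2) =
        lam ((j : ℕ) + 1) * ‖w‖ ^ 2 / (4 * L) by ring, div_le_iff₀ (by positivity)]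
      nlinarith [hSL j hj, hlam' j, norm_nonneg w]) ((37 / 20) ^ 2 * r)
  rw [← map_rotatedComb_pi_mvGaussian lam P hlam hP, measureReal_def, Measure.map_apply hm hmeas]
    at key
  refine (ENNReal.le_ofReal_iff_toReal_le (measure_ne_top _ _) (Real.exp_pos _).le).2 (key.trans ?_)
  simp only [hcoe, ← Finset.sum_mul, hr]
  refine Real.exp_le_exp.2 ?_
  rw [show 2 * (1 / (8 * L)) * (r * ‖w‖ ^ 2) - 1 / (8 * L) * ((37 / 20) ^ 2 * r) =
    (2 * r * ‖w‖ ^ 2 - (37 / 20) ^ 2 * r) / (8 * L) by field_simp, div_le_iff₀ (by positivity)]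
  nlinarith

lemma pi_mvGaussian_le_le (hlam : ∀ k, 1 ≤ k → k ≤ p → 0 ≤ lam k) (hP : P * Pᵀ = 1) (hL : 0 < L)
    (hSL : ∀ j ∈ S, lam ((j : ℕ) + 1) ≤ L) (hr : ∑ j ∈ S, lam ((j : ℕ) + 1) = r)
    (hLr : 64 * n * L ≤ r) (w : EuclideanSpace ℝ (Fin n)) (hw : ‖w‖ < 17 / 16)
    (hw' : 15 / 16 ≤ ‖w‖) :
    (Measure.pi fun _ : Fin n => mvGaussian p lam P)
      {M | ∑ j ∈ S, rotatedComb P M w j ^ 2 ≤ (3 / 8) ^ 2 * r} ≤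
        ENNReal.ofReal (Real.exp (-(4 * n))) := by
  have hm : Measurable fun M : Fin n → Fin p → ℝ => rotatedComb P M w := by
    unfold rotatedComb; fun_prop
  have hw2 : ‖w‖ ^ 2 ≤ 289 / 256 := by nlinarith [norm_nonneg w]
  have hw2' : 225 / 256 ≤ ‖w‖ ^ 2 := by nlinarith [norm_nonneg w]
  have hlam' : ∀ j : Fin p, 0 ≤ lam ((j : ℕ) + 1) := fun j => hlam _ (by omega) (by omega)
  have hcoe : ∀ j : Fin p, (((lam ((j : ℕ) + 1) * ∑ i, w i ^ 2).toNNReal : NNReal) : ℝ) =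
      lam ((j : ℕ) + 1) * ‖w‖ ^ 2 := fun j => by
    rw [← EuclideanSpace.real_norm_sq_eq, Real.coe_toNNReal _ (mul_nonneg (hlam' j) (sq_nonneg _))]
  have hr0 : 0 ≤ r := hr ▸ Finset.sum_nonneg fun j _ => hlam' j
  have hmeas : MeasurableSet {x : Fin p → ℝ | ∑ j ∈ S, x j ^ 2 ≤ (3 / 8) ^ 2 * r} :=
    measurableSet_le (by fun_prop) (by fun_prop)
  have key := measureReal_sum_sq_le_le (fun j : Fin p => (lam ((j : ℕ) + 1) * ∑ i, w i ^ 2).toNNReal)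
    S (s := 1 / (4 * L)) (by positivity) (fun j hj => by
      rw [hcoe, show 2 * (1 / (4 * L)) * (lam ((j : ℕ) + 1) * ‖w‖ ^ 2) =
        lam ((j : ℕ) + 1) * ‖w‖ ^ 2 / (2 * L) by ring, div_le_iff₀ (by positivity)]
      nlinarith [hSL j hj, hlam' j, norm_nonneg w]) ((3 / 8) ^ 2 * r)
  rw [← map_rotatedComb_pi_mvGaussian lam P hlam hP, measureReal_def, Measure.map_apply hm hmeas]
    at key
  refine (ENNReal.le_ofReal_iff_toReal_le (measure_ne_top _ _) (Real.exp_pos _).le).2 (key.trans ?_)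
  simp only [hcoe, ← Finset.sum_mul, hr]
  refine Real.exp_le_exp.2 ?_
  rw [show 1 / (4 * L) * ((3 / 8) ^ 2 * r) - 1 / (4 * L) / 2 * (r * ‖w‖ ^ 2) =
    ((3 / 8) ^ 2 * r - r * ‖w‖ ^ 2 / 2) / (4 * L) by field_simp, div_le_iff₀ (by positivity)]
  nlinarith

lemma measurable_sum_rotatedComb_sq :
    Measurable fun x : (Fin n → Fin p → ℝ) × EuclideanSpace ℝ (Fin n) =>
      ∑ j ∈ S, rotatedComb P x.1 x.2 j ^ 2 := by
  unfold rotatedComb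
  fun_prop

lemma pi_mvGaussian_opNorm_truncatedComb_gt (hlam : ∀ k, 1 ≤ k → k ≤ p → 0 ≤ lam k)
    (hP : P * Pᵀ = 1) (hL : 0 < L)
    (hSL : ∀ j ∈ S, lam ((j : ℕ) + 1) ≤ L) (hr : ∑ j ∈ S, lam ((j : ℕ) + 1) = r)
    (hLr : 64 * n * L ≤ r) :
    (Measure.pi fun _ : Fin n => mvGaussian p lam P) {M | 2 * √r < ‖truncatedComb P S M‖} ≤
      17 ^ n * ENNReal.ofReal (Real.exp (-(4 * n))) := by
  have hr0 : 0 ≤ r := le_trans (by positivity) hLr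
  refine measure_le_of_forall_exists_ball _
    (B := {x | (37 / 20) ^ 2 * r ≤ ∑ j ∈ S, rotatedComb P x.1 x.2 j ^ 2})
    (measurableSet_le measurable_const measurable_sum_rotatedComb_sq)
    (fun w hw => pi_mvGaussian_ge_le hlam hP hL hSL hr hLr w hw) ?_
  intro M (hM : 2 * √r < ‖truncatedComb P S M‖)
  set f := truncatedComb P S M
  have hf0 : 0 < ‖f‖ := lt_of_le_of_lt (by positivity) hM
  obtain ⟨v, hv, hfv⟩ := f.exists_lt_apply_of_lt_opNorm (r := 99 / 100 * ‖f‖) (by linarith)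
  refine ⟨v, hv.le, fun w hw => ?_⟩
  rw [Metric.mem_ball, dist_eq_norm] at hw
  have h1 : ‖f v‖ ≤ ‖f w‖ + ‖f‖ * (1 / 16) := by
    calc ‖f v‖ = ‖f w - f (w - v)‖ := by simp
      _ ≤ ‖f w‖ + ‖f (w - v)‖ := norm_sub_le _ _
      _ ≤ ‖f w‖ + ‖f‖ * (1 / 16) := by
        gcongr
        exact (f.le_opNorm _).trans (by gcongr)
  have h2 : 37 / 20 * √r ≤ ‖f w‖ := by linarith
  have h3 := pow_le_pow_left₀ (by positivity) h2 2
  rwa [mul_pow, Real.sq_sqrt hr0, norm_truncatedComb_sq] at h3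

lemma pi_mvGaussian_exists_norm_truncatedComb_lt (hlam : ∀ k, 1 ≤ k → k ≤ p → 0 ≤ lam k)
    (hP : P * Pᵀ = 1) (hL : 0 < L)
    (hSL : ∀ j ∈ S, lam ((j : ℕ) + 1) ≤ L) (hr : ∑ j ∈ S, lam ((j : ℕ) + 1) = r)
    (hLr : 64 * n * L ≤ r) :
    (Measure.pi fun _ : Fin n => mvGaussian p lam P)
      {M | ‖truncatedComb P S M‖ ≤ 2 * √r ∧ ∃ u, ‖truncatedComb P S M u‖ < √r / 4 * ‖u‖} ≤
      17 ^ n * ENNReal.ofReal (Real.exp (-(4 * n))) := by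
  have hr0 : 0 ≤ r := le_trans (by positivity) hLr
  refine measure_le_of_forall_exists_ball _
    (B := {x | ∑ j ∈ S, rotatedComb P x.1 x.2 j ^ 2 ≤ (3 / 8) ^ 2 * r} ∩ {x | 15 / 16 ≤ ‖x.2‖})
    ((measurableSet_le measurable_sum_rotatedComb_sq measurable_const).inter
      (measurableSet_le (by fun_prop) (by fun_prop))) (fun w hw => ?_) ?_
  · by_cases hw' : 15 / 16 ≤ ‖w‖
    · exact (measure_mono fun M hM => hM.1).trans
        (pi_mvGaussian_le_le hlam hP hL hSL hr hLr w hw hw')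
    · simp [hw']
  rintro M ⟨hM, u, hu⟩
  set f := truncatedComb P S M
  have hu0 : 0 < ‖u‖ := by
    rcases (norm_nonneg u).eq_or_lt with h | h
    · rw [← h, mul_zero] at hu
      exact absurd hu (norm_nonneg _).not_gt
    · exact h
  have hv : ‖‖u‖⁻¹ • u‖ = 1 := by
    rw [norm_smul, norm_inv, norm_norm, inv_mul_cancel₀ hu0.ne']
  have hfv : ‖f (‖u‖⁻¹ • u)‖ ≤ √r / 4 := by
    rw [map_smul, norm_smul, norm_inv, norm_norm, inv_mul_le_iff₀ hu0, mul_comm]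
    exact hu.le
  set v := ‖u‖⁻¹ • u
  refine ⟨v, hv.le, fun w hw => ?_⟩
  rw [Metric.mem_ball, dist_eq_norm] at hw
  constructor
  · have h1 : ‖f w‖ ≤ ‖f v‖ + 2 * √r * (1 / 16) := by
      calc ‖f w‖ = ‖f v + f (w - v)‖ := by simp
        _ ≤ ‖f v‖ + ‖f (w - v)‖ := norm_add_le _ _
        _ ≤ ‖f v‖ + 2 * √r * (1 / 16) := by
          gcongr
          exact (f.le_opNorm _).trans (by gcongr)
    have h2 : ‖f w‖ ≤ 3 / 8 * √r := by linarith
    have h3 := pow_le_pow_left₀ (norm_nonneg _) h2 2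
    rwa [mul_pow, Real.sq_sqrt hr0, norm_truncatedComb_sq] at h3
  · have h1 := norm_sub_norm_le v w
    rw [norm_sub_rev] at h1
    simp only [Set.mem_ofPred_eq]
    linarith

end Tail

lemma seventeen_pow_mul_exp_le (n : ℕ) :
    17 ^ n * ENNReal.ofReal (Real.exp (-(4 * n))) ≤ ENNReal.ofReal (Real.exp (-n)) := by
  rw [show (17 : ℝ≥0∞) = ENNReal.ofReal 17 by simp, ← ENNReal.ofReal_pow (by norm_num),
    ← ENNReal.ofReal_mul (by positivity)]
  refine ENNReal.ofReal_le_ofReal ?_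
  have h17 : (17 : ℝ) ≤ Real.exp 3 := by
    have h := pow_le_pow_left₀ (by norm_num) Real.exp_one_gt_d9.le 3
    rw [← Real.exp_nat_mul] at h
    norm_num at h
    linarith
  calc (17 : ℝ) ^ n * Real.exp (-(4 * n)) ≤ Real.exp 3 ^ n * Real.exp (-(4 * n)) := by gcongr
    _ = Real.exp (-n) := by
      rw [← Real.exp_nat_mul, ← Real.exp_add]
      congr 1; ring

lemma sum_filter_eq_rsum (p : ℕ) (lam : ℕ → ℝ) {k : ℕ} (hk : 1 ≤ k) :
    ∑ j ∈ Finset.univ.filter (fun j : Fin p => k ≤ (j : ℕ) + 1), lam ((j : ℕ) + 1) = rsum p lam k := by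
  rw [rsum]
  refine Finset.sum_bij (fun j _ => (j : ℕ) + 1) ?_ ?_ ?_ fun _ _ => rfl
  · intro j hj
    simp only [Finset.mem_filter, Finset.mem_univ, true_and] at hj
    exact Finset.mem_Icc.2 ⟨hj, j.2⟩
  · intro i _ j _ h
    exact Fin.ext (Nat.succ_injective h)
  · intro i hi
    rw [Finset.mem_Icc] at hi
    exact ⟨⟨i - 1, by omega⟩, by simp; omega, by simp; omega⟩

lemma IsMinInterp.enorm2_sub_le {n p : ℕ} {M : Fin n → Fin p → ℝ} {β b : Fin p → ℝ}
    {ξ : Fin n → ℝ} (h : IsMinInterp M (fun i => (∑ j, M i j * β j) + ξ i) b) {κ : ℝ} (hκ : 0 < κ)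
    (hM : ∀ u, κ * ‖u‖ ≤ ‖LinearMap.adjoint (Matrix.toEuclideanLin (Matrix.of M)) u‖) :
    enorm2 (fun j => b j - β j) ≤ enorm2 β + enorm2 ξ / κ := by
  have hiff : ∀ b' : Fin p → ℝ, (∀ i, ∑ j, M i j * b' j = (∑ j, M i j * β j) + ξ i) ↔
      Matrix.toEuclideanLin (Matrix.of M) (WithLp.toLp 2 b') =
        Matrix.toEuclideanLin (Matrix.of M) (WithLp.toLp 2 β) + WithLp.toLp 2 ξ := by
    intro b'
    constructor
    · intro hb
      ext i
      simpa [Matrix.mulVec, dotProduct] using hb i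
    · intro hb i
      simpa [Matrix.mulVec, dotProduct] using congrArg (fun y => y.ofLp i) hb
  simp only [enorm2_eq_norm]
  refine norm_sub_le_of_minimal_of_adjoint_bound _ hκ hM ((hiff b).1 h.1) fun b' hb' => ?_
  simpa only [enorm2_eq_norm] using h.2 b'.ofLp ((hiff b'.ofLp).2 hb')

/-- Theorem 2: there exists an absolute constant `c > 0` such that if
the constant `c₀` in the definition of `k*` satisfies `c₀ ≥ c`, then in the model
`Y = Xβ* + ξ` with `p ≥ n` and i.i.d. `N(0,Σ)` rows, the minimum `ℓ2`-norm interpolator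
satisfies `P(‖β̂ - β*‖₂ ≤ ‖β*‖₂ + 4‖ξ‖₂/√(r_{k*}(Σ))) ≥ 1 - 2e^{-n}`. -/
theorem stmt4 :
    ∃ c > (0 : ℝ), ∀ c0 : ℝ, c ≤ c0 →
    ∀ (n p : ℕ), 0 < n → n ≤ p →
    ∀ (lam : ℕ → ℝ) (Porth Sig : Matrix (Fin p) (Fin p) ℝ),
      (∀ k, 1 ≤ k → k ≤ p → 0 ≤ lam k) →
      (∀ j k, 1 ≤ j → j ≤ k → k ≤ p → lam k ≤ lam j) →
      Porth * Porthᵀ = 1 →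
      Sig = Porth * Matrix.diagonal (fun i : Fin p => lam ((i : ℕ) + 1)) * Porthᵀ →
      n ≤ Sig.rank →
    ∀ (Ω : Type) (_ : MeasurableSpace Ω) (P : Measure Ω), IsProbabilityMeasure P →
    ∀ (X : Ω → Fin n → Fin p → ℝ) (ξ : Ω → Fin n → ℝ) (βstar : Fin p → ℝ)
      (βhat : Ω → Fin p → ℝ),
      Measure.map X P = (Measure.pi fun _ : Fin n => mvGaussian p lam Porth) →
      (∀ᵐ ω ∂P, IsMinInterp (X ω)
        (fun i => (∑ j, X ω i j * βstar j) + ξ ω i) (βhat ω)) →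
      (kstarSet p lam c0 n).Nonempty →
      ENNReal.ofReal (1 - 2 * Real.exp (-(n : ℝ))) ≤
        P {ω | enorm2 (fun j => βhat ω j - βstar j) ≤
               enorm2 βstar + 4 * enorm2 (ξ ω) /
                 Real.sqrt (rsum p lam (kstar p lam c0 n))} := by
  refine ⟨64, by norm_num, ?_⟩
  intro c0 hc0 n p hn _ lam Porth Sig hlam hanti hP _ _ Ω _ P _ X ξ βstar βhat hX hβ hk
  obtain ⟨hk1, hkp, hkr⟩ := Nat.sInf_mem hk
  change 1 ≤ kstar p lam c0 n at hk1
  change kstar p lam c0 n ≤ p at hkp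
  change c0 * n ≤ rsum p lam (kstar p lam c0 n) / lam (kstar p lam c0 n) at hkr
  set k := kstar p lam c0 n
  set r := rsum p lam k
  have hn0 : (0 : ℝ) < n := by exact_mod_cast hn
  have hL : 0 < lam k := by
    refine (hlam k hk1 hkp).lt_of_ne' fun h => ?_
    rw [h, div_zero] at hkr
    nlinarith
  have hLr : 64 * n * lam k ≤ r :=
    le_trans (by gcongr) ((le_div_iff₀ hL).1 hkr)
  have hr0 : 0 < r := lt_of_lt_of_le (by positivity) hLr
  set S : Finset (Fin p) := {j : Fin p | k ≤ (j : ℕ) + 1}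
  have hSL : ∀ j ∈ S, lam ((j : ℕ) + 1) ≤ lam k := fun j hj =>
    hanti _ _ hk1 (by simpa [S] using hj) j.2
  have hr : ∑ j ∈ S, lam ((j : ℕ) + 1) = r := sum_filter_eq_rsum p lam hk1
  have hXm : AEMeasurable X P := by
    refine AEMeasurable.of_map_ne_zero ?_
    rw [hX]
    exact IsProbabilityMeasure.ne_zero _
  set μ := Measure.pi fun _ : Fin n => mvGaussian p lam Porth
  set A₁ := {M : Fin n → Fin p → ℝ | 2 * √r < ‖truncatedComb Porth S M‖}
  set A₂ := {M : Fin n → Fin p → ℝ | ‖truncatedComb Porth S M‖ ≤ 2 * √r ∧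
    ∃ u, ‖truncatedComb Porth S M u‖ < √r / 4 * ‖u‖}
  have hA₁ : μ A₁ ≤ ENNReal.ofReal (Real.exp (-n)) :=
    (pi_mvGaussian_opNorm_truncatedComb_gt hlam hP hL hSL hr hLr).trans (seventeen_pow_mul_exp_le n)
  have hA₂ : μ A₂ ≤ ENNReal.ofReal (Real.exp (-n)) :=
    (pi_mvGaussian_exists_norm_truncatedComb_lt hlam hP hL hSL hr hLr).trans
      (seventeen_pow_mul_exp_le n)
  set G := {ω | enorm2 (fun j => βhat ω j - βstar j) ≤
    enorm2 βstar + 4 * enorm2 (ξ ω) / Real.sqrt r}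
  have hGc : P Gᶜ ≤ P (X ⁻¹' (A₁ ∪ A₂)) := by
    refine measure_mono_ae ?_
    filter_upwards [hβ] with ω hω hG
    by_contra hgood
    refine hG ?_
    have hnot : X ω ∉ A₁ ∪ A₂ := hgood
    simp only [A₁, A₂, Set.mem_union, Set.mem_ofPred_eq, not_or, not_lt, not_and, not_exists] at hnot
    have h := hω.enorm2_sub_le (κ := √r / 4) (by positivity) fun u =>
      (hnot.2 hnot.1 u).trans (norm_truncatedComb_le hP S _ u)
    change enorm2 _ ≤ _
    refine h.trans (le_of_eq ?_)
    congr 1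
    rw [div_div_eq_mul_div, mul_comm]
  have hbad : P Gᶜ ≤ ENNReal.ofReal (2 * Real.exp (-n)) := by
    calc P Gᶜ ≤ P (X ⁻¹' (A₁ ∪ A₂)) := hGc
      _ ≤ μ (A₁ ∪ A₂) := (Measure.le_map_apply hXm _).trans_eq (by rw [hX])
      _ ≤ μ A₁ + μ A₂ := measure_union_le _ _
      _ ≤ ENNReal.ofReal (Real.exp (-n)) + ENNReal.ofReal (Real.exp (-n)) := add_le_add hA₁ hA₂
      _ = ENNReal.ofReal (2 * Real.exp (-n)) := by
        rw [← ENNReal.ofReal_add (by positivity) (by positivity), two_mul]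
  rw [ENNReal.ofReal_sub _ (by positivity), ENNReal.ofReal_one, tsub_le_iff_right]
  calc (1 : ℝ≥0∞) = P (G ∪ Gᶜ) := by simp
    _ ≤ P G + P Gᶜ := measure_union_le _ _
    _ ≤ P G + ENNReal.ofReal (2 * Real.exp (-n)) := by gcongr
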